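/- Let $d\ge 1$, $k\in\mathbb{N}$, and set $\varepsilon=2^{-2k}$. For $t\in\mathbb{R}$ define $s_t:\mathbb{Z}^d\to\mathbb{C}$ by $s_t(m)=e^{2\pi i|m|^2(t+i\varepsilon)}$ and let $\widehat{s_t}(\alpha)=\sum_{m\in\mathbb{Z}^d}s_t(m)e^{-2\pi i m\cdot\alpha}$. There is a constant $C_d$ such that: if $1\le a\le q\le 2^k$ with $\gcd(a,q)=1$ and $t=a/q+\tau$ with $|\tau|\le 2^{-k}q^{-1}$, then $\sup_{\alpha\in\mathbb{T}^d}|\widehat{s_t}(\alpha)|\le C_d\,q^{-d/2}(\varepsilon+|\tau|)^{-d/2}$. -/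

import Mathlib

open scoped BigOperators Real

noncomputable section

/-- Squared Euclidean norm of a lattice point, as a real number. -/
def nsq {d : ℕ} (m : Fin d → ℤ) : ℝ := ∑ i, ((m i : ℝ)) ^ 2

/-- `s_t(m) = e^{2πi|m|²(t+iε)}`. -/
def sFun {d : ℕ} (ε t : ℝ) (m : Fin d → ℤ) : ℂ :=
  Complex.exp (2 * (π : ℂ) * Complex.I * (nsq m : ℝ) * ((t : ℂ) + Complex.I * (ε : ℝ)))

/-- The Fourier transform `ŝ_t(α) = ∑_m s_t(m) e^{-2πi m·α}`. -/
def sHat {d : ℕ} (ε t : ℝ) (α : Fin d → ℝ) : ℂ :=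
  ∑' m : Fin d → ℤ,
    sFun ε t m * Complex.exp (-(2 * (π : ℂ) * Complex.I) * (∑ i, (m i : ℝ) * α i))

/-!
The sum `ŝ_t(α)` factors into one-dimensional theta values `θ(αᵢ, 2(t + iε))`. For `t = a/q + τ`
put `w = 2(τ + iε)`. Splitting the series for `θ(x, 2a/q + w)` into residue classes mod `q` and
applying Poisson summation to each class turns it into `(-iq²w)^(-1/2)` times a Gaussian sum whose
`j`-th term is weighted by a quadratic Gauss sum mod `q`, of size at most `√(2q)`. In absolute value
the Gaussian sum has parameter `Im w / (q|w|)²`, which is bounded below on the Ford disc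
`q²(τ² + ε²) ≤ Kε`, and a shift of its centre only decreases it because a Gaussian has positive
Fourier transform. The Farey arc `|τ| ≤ 2^(-k)/q` lies in the disc with `K = 2`.
-/

section QuadraticGaussSum

open ZMod

variable {R : Type*} [CommRing R] [Fintype R]

theorem sum_addChar_quadratic_mul_conj (ψ : AddChar R ℂ) (a b : R) :
    (∑ r, ψ (a * r ^ 2 + b * r)) * (starRingEnd ℂ) (∑ r, ψ (a * r ^ 2 + b * r)) =
      ∑ h, ψ (a * h ^ 2 + b * h) * ∑ s, ψ (s * (2 * a * h)) := by
  calc (∑ r, ψ (a * r ^ 2 + b * r)) * (starRingEnd ℂ) (∑ r, ψ (a * r ^ 2 + b * r))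
      = ∑ s, ∑ r, ψ (a * r ^ 2 + b * r) * (starRingEnd ℂ) (ψ (a * s ^ 2 + b * s)) := by
        rw [map_sum, Finset.sum_mul_sum, Finset.sum_comm]
    _ = ∑ s, ∑ h, ψ (a * h ^ 2 + b * h) * ψ (s * (2 * a * h)) := by
        refine Finset.sum_congr rfl fun s _ => ?_
        -- Weyl differencing: substitute `r = h + s`.
        rw [← Equiv.sum_comp (Equiv.addRight s)]
        refine Finset.sum_congr rfl fun h _ => ?_
        rw [← AddChar.map_neg_eq_conj, ← AddChar.map_add_eq_mul, ← AddChar.map_add_eq_mul,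
          Equiv.coe_addRight]
        congr 1
        ring
    _ = ∑ h, ψ (a * h ^ 2 + b * h) * ∑ s, ψ (s * (2 * a * h)) := by
        rw [Finset.sum_comm]
        simp only [Finset.mul_sum]

theorem norm_sum_addChar_quadratic_sq_le [DecidableEq R] {ψ : AddChar R ℂ} (hψ : ψ.IsPrimitive)
    {a : R} (ha : IsUnit a) (b : R) :
    ‖∑ r, ψ (a * r ^ 2 + b * r)‖ ^ 2 ≤
      (Finset.univ.filter fun h : R => 2 * h = 0).card * Fintype.card R := by
  have inner_sum (h : R) :
      ‖∑ s, ψ (s * (2 * a * h))‖ = if 2 * h = 0 then (Fintype.card R : ℝ) else 0 := by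
    have two_mul_mul_eq_zero : 2 * a * h = 0 ↔ 2 * h = 0 := by
      rw [mul_right_comm, mul_comm, ha.mul_right_eq_zero]
    rw [AddChar.sum_mulShift _ hψ]
    simp only [two_mul_mul_eq_zero]
    split_ifs <;> simp
  calc ‖∑ r, ψ (a * r ^ 2 + b * r)‖ ^ 2
      = ‖∑ h, ψ (a * h ^ 2 + b * h) * ∑ s, ψ (s * (2 * a * h))‖ := by
        rw [← sum_addChar_quadratic_mul_conj, norm_mul, RCLike.norm_conj, sq]
    _ ≤ ∑ h, ‖ψ (a * h ^ 2 + b * h) * ∑ s, ψ (s * (2 * a * h))‖ := norm_sum_le _ _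
    _ = ∑ h : R, if 2 * h = 0 then (Fintype.card R : ℝ) else 0 :=
        Finset.sum_congr rfl fun h _ => by rw [norm_mul, inner_sum, AddChar.norm_apply, one_mul]
    _ = (Finset.univ.filter fun h : R => 2 * h = 0).card * Fintype.card R := by
        rw [← Finset.sum_filter, Finset.sum_const, nsmul_eq_mul]

theorem norm_dft_quadratic_le {q : ℕ} [NeZero q] {a : ZMod q} (ha : IsUnit a) (k : ZMod q) :
    ‖𝓕 (fun r : ZMod q => (stdAddChar (a * r ^ 2) : ℂ)) k‖ ≤ √(2 * q) := by
  have dft_eq : 𝓕 (fun r : ZMod q => (stdAddChar (a * r ^ 2) : ℂ)) k =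
      ∑ r, stdAddChar (a * r ^ 2 + -k * r) := by
    rw [dft_apply]
    refine Finset.sum_congr rfl fun r _ => ?_
    rw [smul_eq_mul, ← AddChar.map_add_eq_mul]
    congr 1
    ring
  have card_two_torsion : (Finset.univ.filter fun h : ZMod q => 2 * h = 0).card ≤ 2 := by
    simpa only [nsmul_eq_mul, Nat.cast_ofNat] using
      IsAddCyclic.card_nsmul_eq_zero_le (α := ZMod q) two_pos
  rw [dft_eq]
  refine Real.le_sqrt_of_sq_le
    ((norm_sum_addChar_quadratic_sq_le (isPrimitive_stdAddChar q) ha (-k)).trans ?_)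
  rw [ZMod.card]
  gcongr
  exact_mod_cast card_two_torsion

end QuadraticGaussSum

section Tsum

theorem tsum_eq_sum_tsum_residueClass {E : Type*} [AddCommGroup E] [UniformSpace E]
    [IsUniformAddGroup E] [CompleteSpace E] [T0Space E] {f : ℤ → E} (hf : Summable f)
    (q : ℕ) [NeZero q] :
    ∑' n, f n = ∑ r : ZMod q, ∑' l : ℤ, f (r.val + q * l) := by
  let e : Fin q × ℤ ≃ ℤ := (Equiv.prodComm _ _).trans (Int.divModEquiv q).symm
  have he (r : Fin q) (l : ℤ) : e (r, l) = r + q * l := by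
    simp [e, add_comm, mul_comm]
  have hfe : Summable fun p => f (e p) := hf.comp_injective e.injective
  rw [← e.tsum_eq f, hfe.tsum_prod, tsum_fintype]
  simp only [he]
  refine Fintype.sum_equiv (ZMod.finEquiv q).toEquiv _ _ fun r => ?_
  obtain _ | q := q
  · exact r.elim0
  · rfl

theorem summable_norm_prod_and_tsum_prod_eq {R ι : Type*} [NormedCommRing R]
    [CompleteSpace R] :
    ∀ {d : ℕ} {f : Fin d → ι → R}, (∀ i, Summable fun n => ‖f i n‖) →
      (Summable fun m : Fin d → ι => ‖∏ i, f i (m i)‖) ∧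
        ∑' m : Fin d → ι, ∏ i, f i (m i) = ∏ i, ∑' n, f i n
  | 0, _, _ => ⟨(hasSum_fintype _).summable, by simp [tsum_fintype]⟩
  | d + 1, f, hf => by
    obtain ⟨ih_summable, ih_tsum⟩ :=
      summable_norm_prod_and_tsum_prod_eq fun i : Fin d => hf i.succ
    have prod_cons (p : ι × (Fin d → ι)) :
        ∏ i, f i (Fin.consEquiv (fun _ => ι) p i) = f 0 p.1 * ∏ i : Fin d, f i.succ (p.2 i) := by
      simp [Fin.prod_univ_succ, Fin.consEquiv]
    constructor
    · rw [← (Fin.consEquiv fun _ : Fin (d + 1) => ι).summable_iff]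
      exact ((hf 0).mul_norm ih_summable).congr fun p => congrArg norm (prod_cons p).symm
    · rw [← (Fin.consEquiv fun _ : Fin (d + 1) => ι).tsum_eq, Fin.prod_univ_succ, ← ih_tsum,
        tsum_mul_tsum_of_summable_norm (hf 0) ih_summable]
      exact tsum_congr prod_cons

end Tsum

section HurwitzKernel

open HurwitzZeta

theorem abs_cosKernel_le (a : UnitAddCircle) (t : ℝ) : |cosKernel a t| ≤ cosKernel 0 t := by
  rcases le_or_gt t 0 with ht | ht
  · simp only [cosKernel_undef _ ht, abs_zero, le_refl]
  induction a using QuotientAddGroup.induction_on with | H a =>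
  have hasSum_zero : HasSum (fun n : ℤ => Real.exp (-π * n ^ 2 * t)) (cosKernel 0 t) := by
    simpa [evenKernel_eq_cosKernel_of_zero] using hasSum_int_evenKernel 0 ht
  rw [← Real.norm_eq_abs, ← Complex.norm_real, ← (hasSum_int_cosKernel a ht).tsum_eq]
  refine tsum_of_norm_bounded hasSum_zero fun n => le_of_eq ?_
  rw [norm_mul, Complex.norm_real, Real.norm_of_nonneg (Real.exp_pos _).le, Complex.norm_exp]
  simp

theorem evenKernel_le_evenKernel_zero (a : UnitAddCircle) {t : ℝ} (ht : 0 ≤ t) :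
    evenKernel a t ≤ evenKernel 0 t := by
  rw [evenKernel_functional_equation a, evenKernel_functional_equation 0]
  gcongr
  exact (le_abs_self _).trans (abs_cosKernel_le a _)

theorem antitoneOn_evenKernel (a : UnitAddCircle) : AntitoneOn (evenKernel a) (Set.Ioi 0) := by
  intro s hs t ht hst
  induction a using QuotientAddGroup.induction_on with | H a =>
  refine hasSum_le (fun n => Real.exp_le_exp.mpr ?_) (hasSum_int_evenKernel a ht)
    (hasSum_int_evenKernel a hs)
  simp only [neg_mul, neg_le_neg_iff]
  gcongr

theorem evenKernel_pos (a : UnitAddCircle) {t : ℝ} (ht : 0 < t) : 0 < evenKernel a t := by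
  induction a using QuotientAddGroup.induction_on with | H a =>
  have h := hasSum_int_evenKernel a ht
  rw [← h.tsum_eq]
  exact h.summable.tsum_pos (fun _ => (Real.exp_pos _).le) 0 (Real.exp_pos _)

end HurwitzKernel

section Theta

open Complex ZMod HurwitzZeta

theorem jacobiTheta₂_term_add_mul (r q l : ℤ) (z τ : ℂ) :
    jacobiTheta₂_term (r + q * l) z τ =
      jacobiTheta₂_term r z τ * jacobiTheta₂_term l (q * (z + r * τ)) (q ^ 2 * τ) := by
  simp only [jacobiTheta₂_term, ← exp_add]
  congr 1
  push_cast
  ring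

variable {q : ℕ} [NeZero q] {τ : ℂ}

theorem hasSum_stdAddChar_mul_gaussian (r : ℤ) (z : ℂ) (hτ : 0 < τ.im) :
    HasSum (fun j : ℤ => stdAddChar (r * j : ZMod q) * cexp (-π * I * (z - j / q) ^ 2 / τ))
      ((-I * (q ^ 2 * τ)) ^ (1 / 2 : ℂ) * ∑' l : ℤ, jacobiTheta₂_term (r + q * l) z τ) := by
  have hq : (q : ℂ) ≠ 0 := NeZero.ne _
  have hτ0 : τ ≠ 0 := fun h => by simp [h] at hτ
  have hqτ : 0 < (q ^ 2 * τ).im := by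
    have : (0 : ℝ) < q := mod_cast NeZero.pos q
    rw [show (q ^ 2 * τ : ℂ) = ((q ^ 2 : ℝ) : ℂ) * τ by push_cast; rfl, im_ofReal_mul]
    positivity
  have dual_im_pos : 0 < (-1 / (q ^ 2 * τ)).im := by
    simpa [neg_div, inv_neg] using UpperHalfPlane.im_inv_neg_coe_pos ⟨q ^ 2 * τ, hqτ⟩
  set Z : ℂ := q * (z + r * τ) with hZ
  have dual_term (j : ℤ) : jacobiTheta₂_term r z τ * (cexp (-π * I * Z ^ 2 / (q ^ 2 * τ)) *
      jacobiTheta₂_term j (Z / (q ^ 2 * τ)) (-1 / (q ^ 2 * τ))) =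
        stdAddChar (r * j : ZMod q) * cexp (-π * I * (z - j / q) ^ 2 / τ) := by
    have hchar := stdAddChar_coe (N := q) (r * j)
    push_cast at hchar
    rw [hchar, jacobiTheta₂_term, jacobiTheta₂_term, ← exp_add, ← exp_add, ← exp_add, hZ]
    congr 1
    field_simp
    ring
  have coset_sum : (-I * (q ^ 2 * τ)) ^ (1 / 2 : ℂ) * ∑' l : ℤ, jacobiTheta₂_term (r + q * l) z τ =
      jacobiTheta₂_term r z τ * (cexp (-π * I * Z ^ 2 / (q ^ 2 * τ)) *
        jacobiTheta₂ (Z / (q ^ 2 * τ)) (-1 / (q ^ 2 * τ))) := by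
    have hpow : (-I * (q ^ 2 * τ)) ^ (1 / 2 : ℂ) ≠ 0 := by simp [cpow_eq_zero_iff, hτ0, hq]
    have hterm (l : ℤ) : jacobiTheta₂_term (r + q * l) z τ =
        jacobiTheta₂_term r z τ * jacobiTheta₂_term l Z (q ^ 2 * τ) :=
      jacobiTheta₂_term_add_mul r q l z τ
    simp only [hterm]
    rw [tsum_mul_left, ← jacobiTheta₂, jacobiTheta₂_functional_equation]
    generalize (-I * (q ^ 2 * τ)) ^ (1 / 2 : ℂ) = c at hpow ⊢
    field_simp
  simp only [← dual_term]
  rw [coset_sum]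
  exact ((hasSum_jacobiTheta₂_term _ dual_im_pos).mul_left _).mul_left _

theorem summable_norm_jacobiTheta₂_term (z : ℂ) (hτ : 0 < τ.im) :
    Summable fun n => ‖jacobiTheta₂_term n z τ‖ :=
  ((summable_jacobiTheta₂_term_iff z τ).mpr hτ).norm

theorem hasSum_dft_mul_gaussian (Φ : ZMod q → ℂ) (z : ℂ) (hτ : 0 < τ.im) :
    HasSum (fun j : ℤ => 𝓕 Φ (-j) * cexp (-π * I * (z - j / q) ^ 2 / τ))
      ((-I * (q ^ 2 * τ)) ^ (1 / 2 : ℂ) * ∑' n : ℤ, Φ n * jacobiTheta₂_term n z τ) := by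
  obtain ⟨M, hM⟩ : ∃ M, ∀ r, ‖Φ r‖ ≤ M :=
    ⟨∑ r, ‖Φ r‖, fun r => Finset.single_le_sum (fun _ _ => norm_nonneg _) (Finset.mem_univ r)⟩
  have summable_twist : Summable fun n : ℤ => Φ n * jacobiTheta₂_term n z τ :=
    .of_norm_bounded ((summable_norm_jacobiTheta₂_term z hτ).mul_left M) fun n => by
      rw [norm_mul]
      gcongr
      exact hM n
  have dft_mul (j : ℤ) : 𝓕 Φ (-j) * cexp (-π * I * (z - j / q) ^ 2 / τ) =
      ∑ r : ZMod q, Φ r * (stdAddChar (((r.val : ℤ) : ZMod q) * (j : ZMod q)) *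
        cexp (-π * I * (z - j / q) ^ 2 / τ)) := by
    rw [dft_apply, Finset.sum_mul]
    refine Finset.sum_congr rfl fun r _ => ?_
    simp [mul_assoc, mul_left_comm]
  have sum_cosets : (-I * (q ^ 2 * τ)) ^ (1 / 2 : ℂ) * ∑' n : ℤ, Φ n * jacobiTheta₂_term n z τ =
      ∑ r : ZMod q, Φ r * ((-I * (q ^ 2 * τ)) ^ (1 / 2 : ℂ) *
        ∑' l : ℤ, jacobiTheta₂_term ((r.val : ℤ) + q * l) z τ) := by
    rw [tsum_eq_sum_tsum_residueClass summable_twist q, Finset.mul_sum]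
    refine Finset.sum_congr rfl fun r _ => ?_
    simp [tsum_mul_left, mul_left_comm]
  simp only [dft_mul]
  rw [sum_cosets]
  exact hasSum_sum fun r _ => (hasSum_stdAddChar_mul_gaussian r.val z hτ).mul_left (Φ r)

theorem jacobiTheta₂_two_mul_div_add (a : ℤ) (z τ : ℂ) :
    jacobiTheta₂ z (2 * (a / q) + τ) =
      ∑' n : ℤ, stdAddChar ((a : ZMod q) * (n : ZMod q) ^ 2) * jacobiTheta₂_term n z τ := by
  refine tsum_congr fun n => ?_
  have hchar := stdAddChar_coe (N := q) (a * n ^ 2)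
  push_cast at hchar
  rw [hchar, jacobiTheta₂_term, jacobiTheta₂_term, ← exp_add]
  congr 1
  ring

theorem norm_cexp_neg_pi_mul_I_mul_sq_div (x : ℝ) (j : ℤ) (τ : ℂ) :
    ‖cexp (-π * I * (x - j / q) ^ 2 / τ)‖ =
      Real.exp (-π * (j + -(q * x)) ^ 2 * (τ.im / (q * ‖τ‖) ^ 2)) := by
  have hq : (q : ℝ) ≠ 0 := NeZero.ne _
  have h : (-π * I * (x - j / q) ^ 2 / τ : ℂ) =
      ((-π * (x - j / q) ^ 2 : ℝ) : ℂ) * (I * τ⁻¹) := by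
    push_cast
    ring
  rw [norm_exp, h, re_ofReal_mul, I_mul_re, inv_im, normSq_eq_norm_sq]
  congr 1
  field_simp
  ring

theorem norm_jacobiTheta₂_two_mul_div_add_le {a : ℤ} (ha : IsCoprime a q) (x : ℝ)
    (hτ : 0 < τ.im) :
    ‖jacobiTheta₂ x (2 * (a / q) + τ)‖ ≤
      √(2 / (q * ‖τ‖)) * evenKernel 0 (τ.im / (q * ‖τ‖) ^ 2) := by
  have hq : (0 : ℝ) < q := by exact_mod_cast NeZero.pos q
  have hτ0 : 0 < ‖τ‖ := norm_pos_iff.mpr fun h => by simp [h] at hτ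
  set t := τ.im / (q * ‖τ‖) ^ 2
  have ht : 0 < t := by positivity
  have ha' : IsUnit (a : ZMod q) := (coe_int_isUnit_iff_isCoprime a q).mpr ha.symm
  have h := hasSum_dft_mul_gaussian (fun r : ZMod q => stdAddChar ((a : ZMod q) * r ^ 2)) x hτ
  rw [← jacobiTheta₂_two_mul_div_add] at h
  have norm_mul_le :
      ‖(-I * (q ^ 2 * τ)) ^ (1 / 2 : ℂ) * jacobiTheta₂ x (2 * (a / q) + τ)‖ ≤
        √(2 * q) * evenKernel ((-(q * x) : ℝ) : UnitAddCircle) t := by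
    rw [← h.tsum_eq]
    refine tsum_of_norm_bounded ((hasSum_int_evenKernel (-(q * x)) ht).mul_left _) fun j => ?_
    rw [norm_mul, norm_cexp_neg_pi_mul_I_mul_sq_div]
    gcongr
    exact norm_dft_quadratic_le ha' _
  have norm_cpow : ‖(-I * (q ^ 2 * τ)) ^ (1 / 2 : ℂ)‖ = √(q ^ 2 * ‖τ‖) := by
    rw [show (1 / 2 : ℂ) = ((1 / 2 : ℝ) : ℂ) by push_cast; rfl, norm_cpow_real, Real.sqrt_eq_rpow]
    simp
  have sqrt_div : √(2 / (q * ‖τ‖)) = √(2 * q) / √(q ^ 2 * ‖τ‖) := by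
    rw [← Real.sqrt_div (by positivity)]
    congr 1
    field_simp
  rw [norm_mul, norm_cpow] at norm_mul_le
  rw [sqrt_div, div_mul_eq_mul_div, le_div_iff₀' (by positivity)]
  refine norm_mul_le.trans ?_
  gcongr
  exact evenKernel_le_evenKernel_zero _ ht.le

end Theta

section Farey

open Complex HurwitzZeta

variable {d : ℕ} {ε : ℝ}

theorem sHat_eq_prod_jacobiTheta₂ (hε : 0 < ε) (t : ℝ) (α : Fin d → ℝ) :
    sHat ε t α = ∏ i, jacobiTheta₂ (α i) (2 * (t + I * ε)) := by
  have him : 0 < (2 * (t + I * ε) : ℂ).im := by simpa using hε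
  simp only [← jacobiTheta₂_neg_left (α _)]
  simp only [jacobiTheta₂]
  rw [← (summable_norm_prod_and_tsum_prod_eq fun i =>
    summable_norm_jacobiTheta₂_term (-α i : ℂ) him).2]
  refine tsum_congr fun m => ?_
  simp only [sFun, nsq, jacobiTheta₂_term, ← exp_add, ← exp_sum]
  push_cast
  rw [Finset.sum_add_distrib, Finset.mul_sum, Finset.mul_sum, Finset.sum_mul, add_comm]
  congr 2 <;> exact Finset.sum_congr rfl fun i _ => by ring

theorem norm_sHat_le (hε : 0 < ε) {q : ℕ} [NeZero q] {a : ℤ} (ha : IsCoprime a q) (τ : ℝ)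
    (α : Fin d → ℝ) :
    ‖sHat ε (a / q + τ) α‖ ≤
      (√(2 / (q * (ε + |τ|))) * evenKernel 0 (ε / (2 * q ^ 2 * (τ ^ 2 + ε ^ 2)))) ^ d := by
  have hq : (0 : ℝ) < q := by exact_mod_cast NeZero.pos q
  set w : ℂ := 2 * (τ + I * ε) with hw
  have re_w : w.re = 2 * τ := by simp [hw]
  have im_w : w.im = 2 * ε := by simp [hw]
  have norm_w_sq : ‖w‖ ^ 2 = 4 * (τ ^ 2 + ε ^ 2) := by
    rw [← normSq_eq_norm_sq, normSq_apply, re_w, im_w]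
    ring
  have le_norm_w : ε + |τ| ≤ ‖w‖ := by
    have two_abs_τ_le : 2 * |τ| ≤ ‖w‖ := by simpa [re_w, abs_mul] using abs_re_le_norm w
    have two_ε_le : 2 * ε ≤ ‖w‖ := im_w ▸ im_le_norm w
    linarith
  have height_eq : w.im / (q * ‖w‖) ^ 2 = ε / (2 * q ^ 2 * (τ ^ 2 + ε ^ 2)) := by
    rw [mul_pow, norm_w_sq, im_w]
    field_simp
    ring
  have center_add : 2 * (((a / q + τ : ℝ) : ℂ) + I * ε) = 2 * (a / q) + w := by
    rw [hw]
    push_cast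
    ring
  have factor_le (x : ℝ) : ‖jacobiTheta₂ x (2 * (((a / q + τ : ℝ) : ℂ) + I * ε))‖ ≤
      √(2 / (q * (ε + |τ|))) * evenKernel 0 (ε / (2 * q ^ 2 * (τ ^ 2 + ε ^ 2))) := by
    have h := norm_jacobiTheta₂_two_mul_div_add_le ha x (τ := w) (by rw [im_w]; positivity)
    rw [height_eq] at h
    rw [center_add]
    refine h.trans ?_
    have := evenKernel_pos 0 (show 0 < ε / (2 * q ^ 2 * (τ ^ 2 + ε ^ 2)) by positivity)
    gcongr
  rw [sHat_eq_prod_jacobiTheta₂ hε, norm_prod]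
  refine (Finset.prod_le_prod (fun _ _ => norm_nonneg _) fun i _ => factor_le (α i)).trans_eq ?_
  rw [Finset.prod_const, Finset.card_univ, Fintype.card_fin]

theorem sqrt_inv_pow_eq_rpow {x : ℝ} (hx : 0 ≤ x) (d : ℕ) : √x⁻¹ ^ d = x ^ (-(d : ℝ) / 2) := by
  rw [Real.sqrt_eq_rpow, ← Real.rpow_neg_one, ← Real.rpow_mul hx, ← Real.rpow_mul_natCast hx]
  ring_nf

theorem crude_estimate_general {K : ℝ} (hK : 0 < K) :
    ∃ C : ℝ, 0 < C ∧ ∀ (d q : ℕ) [NeZero q] (a : ℤ) (ε τ : ℝ), IsCoprime a q → 0 < ε →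
      q ^ 2 * (τ ^ 2 + ε ^ 2) ≤ K * ε → ∀ α : Fin d → ℝ,
        ‖sHat ε (a / q + τ) α‖ ≤
          C ^ d * (q : ℝ) ^ (-(d : ℝ) / 2) * (ε + |τ|) ^ (-(d : ℝ) / 2) := by
  have kernel_pos := evenKernel_pos 0 (show 0 < 1 / (2 * K) by positivity)
  refine ⟨√2 * evenKernel 0 (1 / (2 * K)), by positivity, fun d q _ a ε τ ha hε h α => ?_⟩
  have hq : (0 : ℝ) < q := mod_cast NeZero.pos q
  have height_le : 1 / (2 * K) ≤ ε / (2 * q ^ 2 * (τ ^ 2 + ε ^ 2)) := by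
    rw [div_le_div_iff₀ (by positivity) (by positivity)]
    linarith
  have kernel_le := antitoneOn_evenKernel 0 (show 0 < 1 / (2 * K) by positivity)
    (show 0 < ε / (2 * q ^ 2 * (τ ^ 2 + ε ^ 2)) by positivity) height_le
  calc ‖sHat ε (a / q + τ) α‖
      ≤ (√(2 / (q * (ε + |τ|))) * evenKernel 0 (ε / (2 * q ^ 2 * (τ ^ 2 + ε ^ 2)))) ^ d :=
        norm_sHat_le hε ha τ α
    _ ≤ (√(2 / (q * (ε + |τ|))) * evenKernel 0 (1 / (2 * K))) ^ d := by
        have := evenKernel_pos 0 (show 0 < ε / (2 * q ^ 2 * (τ ^ 2 + ε ^ 2)) by positivity)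
        gcongr
    _ = (√2 * evenKernel 0 (1 / (2 * K))) ^ d * √(q * (ε + |τ|))⁻¹ ^ d := by
        rw [div_eq_mul_inv, Real.sqrt_mul zero_le_two, mul_right_comm, mul_pow]
    _ = _ := by
        rw [sqrt_inv_pow_eq_rpow (by positivity), Real.mul_rpow hq.le (by positivity), ← mul_assoc]

theorem sq_mul_sq_add_sq_le_of_abs_le_inv_div {q N τ : ℝ} (hq : 0 < q) (hqN : q ≤ N)
    (hτ : |τ| ≤ N⁻¹ / q) : q ^ 2 * (τ ^ 2 + ((N ^ 2)⁻¹) ^ 2) ≤ 2 * (N ^ 2)⁻¹ := by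
  have hN : 0 < N := hq.trans_le hqN
  have real_part : (q * |τ|) ^ 2 ≤ N⁻¹ ^ 2 := by
    gcongr
    rwa [← le_div_iff₀' hq]
  have imaginary_part : (q / N) ^ 2 * N⁻¹ ^ 2 ≤ N⁻¹ ^ 2 :=
    mul_le_of_le_one_left (sq_nonneg _) (pow_le_one₀ (by positivity) (div_le_one_of_le₀ hqN hN.le))
  calc q ^ 2 * (τ ^ 2 + ((N ^ 2)⁻¹) ^ 2) = (q * |τ|) ^ 2 + (q / N) ^ 2 * N⁻¹ ^ 2 := by
        rw [mul_pow, sq_abs]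
        ring
    _ ≤ N⁻¹ ^ 2 + N⁻¹ ^ 2 := add_le_add real_part imaginary_part
    _ = 2 * (N ^ 2)⁻¹ := by rw [inv_pow, two_mul]

end Farey

/-- **Estimate (CrudeEst)**: on the Farey arc around `a/q`,
`sup_{α ∈ 𝕋^d} |ŝ_t(α)| ≤ C_d q^{-d/2} (ε+|τ|)^{-d/2}`. -/
theorem crude_estimate (d : ℕ) (hd : 1 ≤ d) :
    ∃ C : ℝ, 0 < C ∧ ∀ (k : ℕ) (a q : ℕ) (τ : ℝ),
      1 ≤ a → a ≤ q → q ≤ 2 ^ k → Nat.Coprime a q →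
      |τ| ≤ (2 : ℝ) ^ (-(k : ℤ)) / q →
      ∀ α : Fin d → ℝ,
        ‖sHat (d := d) (((2 : ℝ) ^ (2 * k))⁻¹) ((a : ℝ) / q + τ) α‖ ≤
          C * (q : ℝ) ^ (-(d : ℝ) / 2) * (((2 : ℝ) ^ (2 * k))⁻¹ + |τ|) ^ (-(d : ℝ) / 2) := by
  obtain ⟨C, hC, bound⟩ := crude_estimate_general two_pos
  refine ⟨C ^ d, by positivity, fun k a q τ ha haq hqk hcop hτ α => ?_⟩
  have : NeZero q := ⟨by omega⟩
  rw [zpow_neg, zpow_natCast] at hτ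
  rw [pow_mul']
  exact bound d q a _ τ (Nat.isCoprime_iff_coprime.mpr hcop) (by positivity)
    (sq_mul_sq_add_sq_le_of_abs_le_inv_div (mod_cast NeZero.pos q) (mod_cast hqk) hτ) α
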